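/- arXiv:1704.03311 — 2 statements merged into one kernel-verified Lean document; each statement's English description precedes it below -/
import Mathlib

section
/- Let Ξ be a finite alphabet, let n and b be integers with 2 ≤ b ≤ n, and let C ⊆ Ξ^n be a code with at least two codewords whose minimum Hamming distance d_H(C) satisfies 0 < d_H(C) ≤ n − (b−1). Then d_H(C) + b − 1 ≤ d_b(C) ≤ b · d_H(C), where d_b(C) is the minimum b-symbol distance of C. -/
/-- The `b`-symbol read vector of `x ∈ Ξ^n`: its `i`-th entry is the `b`-tuple
`(x_i, x_{i+1}, …, x_{i+b-1})`, indices modulo `n`. -/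
def piB {Ξ : Type*} {n : ℕ} (b : ℕ) (x : Fin n → Ξ) : Fin n → (Fin b → Ξ) :=
  fun i j => x ⟨((i : ℕ) + (j : ℕ)) % n, Nat.mod_lt _ i.pos⟩

/-- The minimum Hamming distance of a code `C ⊆ Ξ^n`. -/
noncomputable def dHset {Ξ : Type*} {n : ℕ} (C : Set (Fin n → Ξ)) : ℕ :=
  letI := Classical.decEq Ξ
  sInf {d | ∃ x ∈ C, ∃ y ∈ C, x ≠ y ∧ d = hammingDist x y}

/-- The minimum `b`-symbol distance of a code `C ⊆ Ξ^n`. -/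
noncomputable def dBset {Ξ : Type*} {n : ℕ} (b : ℕ) (C : Set (Fin n → Ξ)) : ℕ :=
  letI := Classical.decEq Ξ
  sInf {d | ∃ x ∈ C, ∃ y ∈ C, x ≠ y ∧ d = hammingDist (piB b x) (piB b y)}

/-! The positions where the read vectors of `x` and `y` differ form the sumset `P + D`, where `D` is
the set of positions where `x` and `y` differ and `P = {0, -1, …, -(b - 1)}`. The upper bound is
`#(P + D) ≤ #P * #D`. For the lower bound, a nonempty subset of a cyclic group that is mapped into
itself by translation by a generator is the whole group, so each term added to the progression `P`
enlarges `P + D` until it fills `ℤ/n`. -/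

open Finset
open scoped Pointwise

section Progression

variable {G : Type*} [AddMonoid G] [DecidableEq G]

/-- The arithmetic progression `{0, g, …, (k - 1) • g}`; its sumset with `{a}` is the window of
length `k` with step `g` starting at `a`. Repeated terms are counted once. -/
def progression (g : G) (k : ℕ) : Finset G :=
  (range k).image (· • g)

theorem mem_progression {g a : G} {k : ℕ} : a ∈ progression g k ↔ ∃ j < k, j • g = a := by
  simp only [progression, mem_image, mem_range]

theorem card_progression_le (g : G) (k : ℕ) : #(progression g k) ≤ k :=
  card_image_le.trans_eq (card_range k)

theorem progression_one (g : G) : progression g 1 = {0} := by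
  rw [progression, range_one, image_singleton, zero_nsmul]

theorem progression_union_vadd_subset (g : G) (k : ℕ) :
    progression g k ∪ (g +ᵥ progression g k) ⊆ progression g (k + 1) := by
  refine union_subset (image_subset_image (range_mono k.le_succ)) fun a ha => ?_
  obtain ⟨c, hc, rfl⟩ := mem_vadd_finset.1 ha
  obtain ⟨j, hj, rfl⟩ := mem_progression.1 hc
  exact mem_progression.2 ⟨j + 1, by omega, succ_nsmul' g j⟩

theorem card_progression_add_le (g : G) (k : ℕ) (S : Finset G) :
    #(progression g k + S) ≤ k * #S :=
  card_add_le.trans (Nat.mul_le_mul_right _ (card_progression_le g k))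

end Progression

section Generator

variable {G : Type*} [AddGroup G] [Fintype G] [DecidableEq G] {g : G}

theorem eq_univ_of_vadd_subset (hg : AddSubgroup.zmultiples g = ⊤)
    {T : Finset G} (hT : T.Nonempty) (h : g +ᵥ T ⊆ T) : T = univ := by
  have stabilizer_eq_top : AddAction.stabilizer G T = ⊤ := by
    rw [eq_top_iff, ← hg, AddSubgroup.zmultiples_le, AddAction.mem_stabilizer_finset']
    exact fun t ht => h (vadd_mem_vadd_finset ht)
  obtain ⟨t, ht⟩ := hT
  refine eq_univ_of_forall fun a => ?_
  have vadd_mem : (a - t) +ᵥ t ∈ T :=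
    AddAction.mem_stabilizer_finset'.1 (stabilizer_eq_top ▸ AddSubgroup.mem_top (a - t)) ht
  rwa [vadd_eq_add, sub_add_cancel] at vadd_mem

theorem min_card_add_one_le_card_union_vadd
    (hg : AddSubgroup.zmultiples g = ⊤) {T : Finset G} (hT : T.Nonempty) :
    min (Fintype.card G) (#T + 1) ≤ #(T ∪ (g +ᵥ T)) := by
  by_cases h : g +ᵥ T ⊆ T
  · rw [union_eq_left.2 h, eq_univ_of_vadd_subset hg hT h, card_univ]
    exact min_le_left _ _
  · have ssubset_union : T ⊂ T ∪ (g +ᵥ T) :=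
      subset_union_left.ssubset_of_ne fun heq => h (union_eq_left.1 heq.symm)
    exact (min_le_right _ _).trans (card_lt_card ssubset_union)

theorem min_card_add_le_card_progression_add
    (hg : AddSubgroup.zmultiples g = ⊤) {S : Finset G} (hS : S.Nonempty) (k : ℕ) :
    min (Fintype.card G) (#S + k) ≤ #(progression g (k + 1) + S) := by
  induction k with
  | zero => simp only [zero_add, progression_one, singleton_zero, add_zero, min_le_right]
  | succ k ih =>
    set T := progression g (k + 1) + S with hT_def
    have hT : T.Nonempty := ⟨_, add_mem_add (mem_progression.2 ⟨0, k.succ_pos, rfl⟩) hS.choose_spec⟩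
    have union_vadd_subset : T ∪ (g +ᵥ T) ⊆ progression g (k + 1 + 1) + S := by
      rw [hT_def, ← vadd_add_assoc, ← union_add]
      exact add_subset_add_right (progression_union_vadd_subset g (k + 1))
    have growth := min_card_add_one_le_card_union_vadd hg hT
    have card_le := card_le_card union_vadd_subset
    omega

end Generator

section ReadVector

variable {n : ℕ} [NeZero n]

theorem val_nsmul_one_fin (j : ℕ) : ((j • (1 : Fin n) : Fin n) : ℕ) = j % n := by
  induction j with
  | zero => simp only [zero_nsmul, Fin.val_zero, Nat.zero_mod]
  | succ j ih => rw [succ_nsmul, Fin.val_add, ih, Fin.val_one', ← Nat.add_mod]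

theorem zmultiples_one_fin : AddSubgroup.zmultiples (1 : Fin n) = ⊤ :=
  (AddSubgroup.eq_top_iff' _).2 fun i => AddSubgroup.mem_zmultiples_iff.2
    ⟨(i : ℕ), Fin.ext <| by rw [natCast_zsmul, val_nsmul_one_fin, Nat.mod_eq_of_lt i.isLt]⟩

variable {Ξ : Type*}

theorem piB_apply (b : ℕ) (x : Fin n → Ξ) (i : Fin n) (j : Fin b) :
    piB b x i j = x ((j : ℕ) • 1 + i) := by
  have val_eq : (i + j : ℕ) % n = (((j : ℕ) • 1 + i : Fin n) : ℕ) := by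
    rw [Fin.val_add, val_nsmul_one_fin, Nat.mod_add_mod, Nat.add_comm]
  exact congrArg x (Fin.ext val_eq)

theorem filter_piB_ne [DecidableEq Ξ] (b : ℕ) (x y : Fin n → Ξ) :
    ({i | piB b x i ≠ piB b y i} : Finset (Fin n)) =
      progression (-1) b + ({i | x i ≠ y i} : Finset (Fin n)) := by
  ext i
  simp only [mem_filter_univ, mem_add, mem_progression, Function.ne_iff, piB_apply, smul_neg]
  constructor
  · rintro ⟨j, hj⟩
    exact ⟨_, ⟨j, j.isLt, rfl⟩, _, hj, neg_add_cancel_left _ i⟩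
  · rintro ⟨_, ⟨j, hj, rfl⟩, d, hd, rfl⟩
    exact ⟨⟨j, hj⟩, by rwa [add_neg_cancel_left]⟩

end ReadVector

section BDist

variable {Ξ : Type*} [DecidableEq Ξ] {n : ℕ}

/-- The `b`-symbol distance `d_b(x, y)`; its minimum over a code is `dBset`. -/
def bDist (b : ℕ) (x y : Fin n → Ξ) : ℕ :=
  hammingDist (piB b x) (piB b y)

theorem bDist_le_mul_hammingDist (b : ℕ) (x y : Fin n → Ξ) :
    bDist b x y ≤ b * hammingDist x y := by
  obtain rfl | _ := eq_zero_or_neZero n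
  · rw [bDist, Subsingleton.elim (piB b x) (piB b y), hammingDist_self]
    exact Nat.zero_le _
  · rw [bDist, hammingDist, filter_piB_ne]
    exact card_progression_add_le _ _ _

theorem min_hammingDist_add_le_bDist {x y : Fin n → Ξ} (hxy : x ≠ y) (k : ℕ) :
    min n (hammingDist x y + k) ≤ bDist (k + 1) x y := by
  obtain ⟨i, hi⟩ := Function.ne_iff.1 hxy
  have : NeZero n := ⟨i.pos.ne'⟩
  have neg_one_generates : AddSubgroup.zmultiples (-1 : Fin n) = ⊤ :=
    AddSubgroup.zmultiples_neg.trans zmultiples_one_fin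
  have bound := min_card_add_le_card_progression_add neg_one_generates
    (S := {i | x i ≠ y i}) ⟨i, mem_filter_univ i |>.2 hi⟩ k
  rwa [Fintype.card_fin, ← filter_piB_ne] at bound

end BDist

section MinDist

variable {α : Type*} {C : Set α}

/-- The minimum of `f` over pairs of distinct codewords of `C`, so that the minimum Hamming and
`b`-symbol distances are instances of one notion. If `C` has fewer than two codewords the infimum
is over the empty set and the value is `0`. -/
noncomputable def minDist (f : α → α → ℕ) (C : Set α) : ℕ :=
  sInf {d | ∃ x ∈ C, ∃ y ∈ C, x ≠ y ∧ d = f x y}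

theorem minDist_le (f : α → α → ℕ) {x y : α} (hx : x ∈ C) (hy : y ∈ C) (hxy : x ≠ y) :
    minDist f C ≤ f x y :=
  Nat.sInf_le ⟨x, hx, y, hy, hxy, rfl⟩

theorem exists_minDist_eq (f : α → α → ℕ) (hC : C.Nontrivial) :
    ∃ x ∈ C, ∃ y ∈ C, x ≠ y ∧ minDist f C = f x y :=
  let ⟨x, hx, y, hy, hxy⟩ := hC
  Nat.sInf_mem (s := {d | ∃ x ∈ C, ∃ y ∈ C, x ≠ y ∧ d = f x y}) ⟨f x y, x, hx, y, hy, hxy, rfl⟩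

end MinDist

open Classical in
theorem dHset_eq_minDist {Ξ : Type*} {n : ℕ} (C : Set (Fin n → Ξ)) :
    dHset C = minDist hammingDist C :=
  rfl

open Classical in
theorem dBset_eq_minDist {Ξ : Type*} {n : ℕ} (b : ℕ) (C : Set (Fin n → Ξ)) :
    dBset b C = minDist (bDist b) C :=
  rfl

theorem b_distance_bounds_general {Ξ : Type*} {n b : ℕ} (hb : 0 < b) {C : Set (Fin n → Ξ)}
    (hC : C.Nontrivial) :
    min n (dHset C + b - 1) ≤ dBset b C ∧ dBset b C ≤ b * dHset C := by
  classical
  obtain ⟨k, rfl⟩ := Nat.exists_eq_add_one.2 hb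
  rw [dHset_eq_minDist, dBset_eq_minDist]
  constructor
  · obtain ⟨x, hx, y, hy, hxy, h⟩ := exists_minDist_eq (bDist (k + 1)) hC
    calc min n (minDist hammingDist C + k)
        ≤ min n (hammingDist x y + k) := by gcongr; exact minDist_le _ hx hy hxy
      _ ≤ bDist (k + 1) x y := min_hammingDist_add_le_bDist hxy k
      _ = minDist (bDist (k + 1)) C := h.symm
  · obtain ⟨x, hx, y, hy, hxy, h⟩ := exists_minDist_eq hammingDist hC
    calc minDist (bDist (k + 1)) C
        ≤ bDist (k + 1) x y := minDist_le _ hx hy hxy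
      _ ≤ (k + 1) * hammingDist x y := bDist_le_mul_hammingDist (k + 1) x y
      _ = (k + 1) * minDist hammingDist C := by rw [h]

/-- If `Ξ` is a finite alphabet, `2 ≤ b ≤ n`, and `C ⊆ Ξ^n` is a code with at
least two codewords whose minimum Hamming distance satisfies
`0 < d_H(C) ≤ n - (b-1)`, then `d_H(C) + b - 1 ≤ d_b(C) ≤ b * d_H(C)`. -/
theorem b_distance_bounds {Ξ : Type*} [Fintype Ξ] {n b : ℕ}
    (hb2 : 2 ≤ b) (hbn : b ≤ n) (C : Set (Fin n → Ξ)) (hC : C.Nontrivial)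
    (hd0 : 0 < dHset C) (hdn : dHset C ≤ n - (b - 1)) :
    dHset C + b - 1 ≤ dBset b C ∧ dBset b C ≤ b * dHset C := by
  obtain ⟨lower, upper⟩ := b_distance_bounds_general (zero_lt_two.trans_le hb2) hC
  exact ⟨by omega, upper⟩
end

section
/- Let p be a prime, m a positive integer, e an integer with e ≥ 2, and b an integer with b ≥ 2. Let i be an integer with 1 ≤ i ≤ p^{e−1} such that i + b ≤ p^e and i ≤ b. Then the cyclic code C_i = ⟨(x−1)^i⟩ ⊆ 𝔽_{p^m}[x]/⟨x^{p^e}−1⟩ satisfies d_b(C_i) = i + b. -/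
open Polynomial

/-- The cyclic code `C_i = ⟨(x-1)^i⟩ ⊆ 𝔽_{p^m}[x]/⟨x^{p^e}-1⟩` of length `p^e`
over `𝔽_{p^m}`, viewed as the set of coefficient vectors `c ∈ 𝔽_{p^m}^{p^e}`
whose associated polynomial is congruent to a multiple of `(x-1)^i` modulo
`x^{p^e} - 1`. -/
noncomputable def Ccode (p m e : ℕ) [Fact p.Prime] (i : ℕ) :
    Set (Fin (p ^ e) → GaloisField p m) :=
  {c | ∃ f : Polynomial (GaloisField p m),
    (X ^ (p ^ e) - 1 : Polynomial (GaloisField p m)) ∣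
      ((∑ j : Fin (p ^ e), Polynomial.C (c j) * X ^ (j : ℕ)) - (X - 1) ^ i * f)}

/-- The minimum `b`-symbol distance of a code `C ⊆ F^n`. -/
noncomputable def dBcode {F : Type*} {n : ℕ} (b : ℕ) (Cc : Set (Fin n → F)) : ℕ :=
  letI := Classical.decEq F
  sInf {d | ∃ x ∈ Cc, ∃ y ∈ Cc, x ≠ y ∧ d = hammingDist (piB b x) (piB b y)}

/-!
Let `g ∣ X ^ n - 1` generate the code, so that the code is closed under rotation and `g` is
coprime to `X`. A nonzero codeword with some zero window can be rotated so that its first `b`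
entries vanish; being a multiple of `g`, its polynomial then has lowest and highest terms at least
`deg g` positions apart. Since the lowest one is preceded by `b` zeros and `deg g ≤ b`, at least
`b + deg g` windows contain one of these two positions: `b` the lowest, `deg g` others the
highest. A word without zero windows has weight `n ≥ deg g + b`, and the coefficient word of `g`
itself has weight at most `deg g + b`.
-/

section Polynomial

variable {R : Type*} [CommRing R]

lemma X_pow_sub_one_dvd_X_pow_mod_sub (n a : ℕ) :
    (X ^ n - 1 : R[X]) ∣ X ^ (a % n) - X ^ a := by
  have h : (X ^ (a % n) - X ^ a : R[X]) = -X ^ (a % n) * ((X ^ n) ^ (a / n) - 1) := by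
    conv_lhs => rw [← Nat.mod_add_div a n, Nat.add_mul_mod_self_left, Nat.mod_mod]
    ring
  exact h ▸ (sub_one_dvd_pow_sub_one _ _).mul_left _

lemma isCoprime_X_of_dvd_X_pow_sub_one {n : ℕ} [NeZero n] {g : R[X]} (hg : g ∣ X ^ n - 1) :
    IsCoprime g X := by
  have h : IsCoprime (X ^ n - 1 : R[X]) (X ^ n) := ⟨-1, 1, by ring⟩
  exact ((IsCoprime.pow_right_iff (NeZero.pos n)).1 h).of_isCoprime_of_dvd_left hg

lemma natDegree_add_natTrailingDegree_le_of_dvd {g P : R[X]} (hg : g.Monic)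
    (hgX : IsCoprime g X) (hP : P ≠ 0) (hgP : g ∣ P) :
    g.natDegree + P.natTrailingDegree ≤ P.natDegree := by
  obtain ⟨Q, hPQ⟩ : X ^ P.natTrailingDegree ∣ P :=
    X_pow_dvd_iff.2 fun _ => coeff_eq_zero_of_lt_natTrailingDegree
  have hQ : Q ≠ 0 := right_ne_zero_of_mul (hPQ ▸ hP)
  have hgQ : g ∣ Q := hgX.pow_right.dvd_of_dvd_mul_left (hPQ ▸ hgP)
  have : Nontrivial R := Polynomial.nontrivial_iff.1 ⟨Q, 0, hQ⟩
  calc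
    g.natDegree + P.natTrailingDegree ≤ Q.natDegree + P.natTrailingDegree := by
      gcongr
      exact le_of_not_gt fun h => hg.not_dvd_of_natDegree_lt hQ h hgQ
    _ = (X ^ P.natTrailingDegree * Q).natDegree := (natDegree_X_pow_mul _ hQ).symm
    _ = P.natDegree := congrArg natDegree hPQ.symm

lemma X_sub_one_pow_dvd_X_pow_char_pow_sub_one (p : ℕ) [ExpChar R p] {e i : ℕ}
    (hi : i ≤ p ^ e) : (X - 1 : R[X]) ^ i ∣ X ^ p ^ e - 1 := by
  have h : (X ^ p ^ e - 1 : R[X]) = (X - 1) ^ p ^ e := by rw [sub_pow_expChar_pow, one_pow]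
  exact h ▸ pow_dvd_pow _ hi

lemma natDegree_X_sub_one_pow [Nontrivial R] (i : ℕ) : ((X - 1 : R[X]) ^ i).natDegree = i := by
  rw [← C_1, (monic_X_sub_C 1).natDegree_pow, natDegree_X_sub_C, mul_one]

end Polynomial

section Weight

variable {A : Type*} {n b : ℕ}

lemma piB_comp_addRight [NeZero n] (c : Fin n → A) (u : Fin n) :
    piB b (c ∘ Equiv.addRight u) = piB b c ∘ Equiv.addRight u := by
  ext t j
  refine congrArg c (Fin.ext ?_)
  simp [Fin.val_add, add_right_comm]

variable [Zero A]

lemma piB_ne_zero {c : Fin n → A} {t a : Fin n} (hta : t ≤ a) (hat : (a : ℕ) < t + b)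
    (ha : c a ≠ 0) : piB b c t ≠ 0 := by
  refine Function.ne_iff.2 ⟨⟨a - t, by omega⟩, ?_⟩
  have : ((t : ℕ) + (a - t)) % n = a := by
    rw [Nat.add_sub_cancel' hta, Nat.mod_eq_of_lt a.isLt]
  simpa [piB, this] using ha

variable [DecidableEq A]

lemma hammingNorm_comp_equiv {ι κ : Type*} [Fintype ι] [Fintype κ] (x : κ → A) (σ : ι ≃ κ) :
    hammingNorm (x ∘ σ) = hammingNorm x :=
  Finset.card_equiv σ (by simp)

lemma hammingNorm_piB_le (hb : 0 < b) {i : ℕ} {c : Fin n → A}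
    (hc : ∀ j : Fin n, i < j → c j = 0) : hammingNorm (piB b c) ≤ i + b := by
  have hmaps : ∀ t, piB b c t ≠ 0 → (t : ℕ) ∈ Finset.Iic i ∪ Finset.Ioo (n - b) n := by
    intro t ht
    by_contra hout
    refine ht (funext fun j => hc _ ?_)
    simp only [Finset.mem_union, Finset.mem_Iic, Finset.mem_Ioo] at hout
    have : (t : ℕ) + j < n := by omega
    simp only [Nat.mod_eq_of_lt this]
    omega
  calc
    hammingNorm (piB b c) ≤ (Finset.Iic i ∪ Finset.Ioo (n - b) n).card :=
      Finset.card_le_card_of_injOn Fin.val (fun t ht => hmaps t (Finset.mem_filter.1 ht).2)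
        Fin.val_injective.injOn
    _ ≤ (i + 1) + (n - (n - b) - 1) := by
      simpa using Finset.card_union_le (Finset.Iic i) (Finset.Ioo (n - b) n)
    _ ≤ i + b := by omega

-- The windows starting in `(a - b, a]` contain `a`, and those starting in `(d - i, d]` contain `d`.
lemma add_le_hammingNorm_piB {c : Fin n → A} {i : ℕ} {a d : Fin n} (hib : i ≤ b)
    (hba : b ≤ a) (hiad : i + a ≤ d) (ha : c a ≠ 0) (hd : c d ≠ 0) :
    i + b ≤ hammingNorm (piB b c) := by
  let a' : Fin n := ⟨a - b, by omega⟩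
  let d' : Fin n := ⟨d - i, by omega⟩
  have hdisj : Disjoint (Finset.Ioc a' a) (Finset.Ioc d' d) :=
    Finset.Ioc_disjoint_Ioc_of_le (Fin.le_def.2 (by simp only [d']; omega))
  calc
    i + b = (Finset.Ioc a' a ∪ Finset.Ioc d' d).card := by
      rw [Finset.card_union_of_disjoint hdisj, Fin.card_Ioc, Fin.card_Ioc]
      simp only [a', d']
      omega
    _ ≤ hammingNorm (piB b c) := by
      refine Finset.card_le_card fun t ht => Finset.mem_filter.2 ⟨Finset.mem_univ t, ?_⟩
      simp only [Finset.mem_union, Finset.mem_Ioc, Fin.lt_def, a', d'] at ht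
      rcases ht with ⟨hlt, hle⟩ | ⟨hlt, hle⟩
      · exact piB_ne_zero hle (by omega) ha
      · exact piB_ne_zero hle (by omega) hd

end Weight

section MinimumDistance

variable {A : Type*} [AddGroup A] [hA : DecidableEq A] {n b : ℕ}

lemma hammingDist_piB (x y : Fin n → A) :
    hammingDist (piB b x) (piB b y) = hammingNorm (piB b (-x + y)) :=
  hammingDist_eq_hammingNorm _ _

lemma dBcode_eq_of_forall_le_of_exists_le {S : Type*} [SetLike S (Fin n → A)]
    [AddSubgroupClass S (Fin n → A)] (𝒞 : S) {d : ℕ}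
    (hle : ∀ c ∈ 𝒞, c ≠ 0 → d ≤ hammingNorm (piB b c))
    (hex : ∃ c ∈ 𝒞, c ≠ 0 ∧ hammingNorm (piB b c) ≤ d) :
    dBcode b (𝒞 : Set (Fin n → A)) = d := by
  -- `dBcode` counts with classical decidable equality.
  let := Classical.decEq A
  obtain rfl : hA = this := Subsingleton.elim _ _
  obtain ⟨c, hc, hc0, hcd⟩ := hex
  refine IsLeast.csInf_eq ⟨⟨0, zero_mem 𝒞, c, hc, hc0.symm, ?_⟩, ?_⟩
  · rw [hammingDist_piB, neg_zero, zero_add]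
    exact (hle c hc hc0).antisymm hcd
  · rintro _ ⟨x, hx, y, hy, hxy, rfl⟩
    rw [hammingDist_piB]
    exact hle (-x + y) (add_mem (neg_mem hx) hy) (neg_add_eq_zero.not.2 hxy)

end MinimumDistance

section CyclicCode

variable {R : Type*} [CommRing R] [DecidableEq R] {n b : ℕ} {g : R[X]} {c : Fin n → R}

/-- The code of words of length `n` whose polynomial is a multiple of `g`. If `g ∣ X ^ n - 1`, it is
the cyclic code `⟨g⟩ ⊆ R[X] / ⟨X ^ n - 1⟩` with generator polynomial `g`. -/
noncomputable def cyclicCode (n : ℕ) (g : R[X]) : Submodule R (Fin n → R) :=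
  ((Ideal.span {g}).restrictScalars R).comap (ofFn n)

lemma mem_cyclicCode : c ∈ cyclicCode n g ↔ g ∣ ofFn n c :=
  Ideal.mem_span_singleton

lemma ofFn_eq_sum_C_mul_X_pow (c : Fin n → R) :
    ofFn n c = ∑ j : Fin n, C (c j) * X ^ (j : ℕ) := by
  simp_rw [ofFn_eq_sum_monomial, C_mul_X_pow_eq_monomial]

lemma X_pow_sub_one_dvd_ofFn_comp_addRight_sub [NeZero n] (c : Fin n → R) (u : Fin n) :
    X ^ n - 1 ∣ ofFn n (c ∘ Equiv.addRight u) - X ^ (-u : Fin n).val * ofFn n c := by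
  have hshift : ofFn n (c ∘ Equiv.addRight u) =
      ∑ j : Fin n, C (c j) * X ^ ((j + (-u : Fin n).val) % n) := by
    rw [ofFn_eq_sum_C_mul_X_pow, ← Equiv.sum_comp (Equiv.addRight (-u))]
    simp [Fin.val_add]
  rw [hshift, ofFn_eq_sum_C_mul_X_pow, Finset.mul_sum, ← Finset.sum_sub_distrib]
  refine Finset.dvd_sum fun j _ => ?_
  convert (X_pow_sub_one_dvd_X_pow_mod_sub n (j + (-u : Fin n).val)).mul_left (C (c j)) using 1
  ring

lemma comp_addRight_mem_cyclicCode [NeZero n] (hg : g ∣ X ^ n - 1) (hc : c ∈ cyclicCode n g)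
    (u : Fin n) : c ∘ Equiv.addRight u ∈ cyclicCode n g :=
  mem_cyclicCode.2 <| (dvd_iff_dvd_of_dvd_sub
    (hg.trans (X_pow_sub_one_dvd_ofFn_comp_addRight_sub c u))).2 ((mem_cyclicCode.1 hc).mul_left _)

lemma natDegree_add_le_hammingNorm_piB_of_piB_zero [NeZero n] (hg : g.Monic)
    (hdvd : g ∣ X ^ n - 1) (hgb : g.natDegree ≤ b) (hc : c ∈ cyclicCode n g) (hc0 : c ≠ 0)
    (hzero : piB b c 0 = 0) : g.natDegree + b ≤ hammingNorm (piB b c) := by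
  have hP : ofFn n c ≠ 0 := (map_ne_zero_iff _ (injective_ofFn n)).2 hc0
  have hcoeff : ∀ {k}, (ofFn n c).coeff k ≠ 0 → ∃ hkn : k < n, c ⟨k, hkn⟩ ≠ 0 := by
    intro k hk
    have hkn : k < n := not_le.1 fun h => hk (ofFn_coeff_eq_zero_of_ge c h)
    exact ⟨hkn, ofFn_coeff_eq_val_of_lt c hkn ▸ hk⟩
  obtain ⟨hdn, hd⟩ := hcoeff (leadingCoeff_ne_zero.2 hP)
  obtain ⟨han, ha⟩ := hcoeff (trailingCoeff_nonzero_iff_nonzero.2 hP)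
  refine add_le_hammingNorm_piB hgb (not_lt.1 fun hlt => ?_)
    (natDegree_add_natTrailingDegree_le_of_dvd hg (isCoprime_X_of_dvd_X_pow_sub_one hdvd) hP
      (mem_cyclicCode.1 hc)) ha hd
  exact piB_ne_zero (t := 0) (Fin.zero_le _) (by simpa using hlt) ha hzero

lemma natDegree_add_le_hammingNorm_piB [NeZero n] (hg : g.Monic) (hdvd : g ∣ X ^ n - 1)
    (hgb : g.natDegree ≤ b) (hgn : g.natDegree + b ≤ n) (hc : c ∈ cyclicCode n g) (hc0 : c ≠ 0) :
    g.natDegree + b ≤ hammingNorm (piB b c) := by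
  by_cases hfull : ∀ t, piB b c t ≠ 0
  · simpa [hammingNorm, hfull] using hgn
  · push Not at hfull
    obtain ⟨u, hu⟩ := hfull
    rw [← hammingNorm_comp_equiv _ (Equiv.addRight u), ← piB_comp_addRight]
    refine natDegree_add_le_hammingNorm_piB_of_piB_zero hg hdvd hgb
      (comp_addRight_mem_cyclicCode hdvd hc u) ?_ ?_
    · exact fun h => hc0 ((Equiv.addRight u).surjective.injective_comp_right h)
    · rw [piB_comp_addRight]
      simpa using hu

lemma exists_mem_cyclicCode_hammingNorm_piB_le [Nontrivial R] (hb : 0 < b) (hg : g.Monic)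
    (hgn : g.natDegree < n) :
    ∃ c ∈ cyclicCode n g, c ≠ 0 ∧ hammingNorm (piB b c) ≤ g.natDegree + b := by
  have hgc : ofFn n (toFn n g) = g := ofFn_comp_toFn_eq_id_of_natDegree_lt hgn
  refine ⟨toFn n g, mem_cyclicCode.2 hgc.symm.dvd, fun h => hg.ne_zero ?_,
    hammingNorm_piB_le hb fun j => coeff_eq_zero_of_natDegree_lt⟩
  rw [← hgc, h, map_zero]

end CyclicCode

lemma Ccode_eq_cyclicCode (p m e : ℕ) [Fact p.Prime] [DecidableEq (GaloisField p m)] {i : ℕ}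
    (hi : i ≤ p ^ e) :
    Ccode p m e i = (cyclicCode (p ^ e) ((X - 1) ^ i) : Submodule (GaloisField p m) _) := by
  have hdvd := X_sub_one_pow_dvd_X_pow_char_pow_sub_one (R := GaloisField p m) p hi
  ext c
  rw [SetLike.mem_coe, mem_cyclicCode, ofFn_eq_sum_C_mul_X_pow]
  constructor
  · rintro ⟨f, hf⟩
    exact (dvd_iff_dvd_of_dvd_sub (hdvd.trans hf)).2 (dvd_mul_right _ f)
  · rintro ⟨f, hf⟩
    exact ⟨f, by rw [hf, sub_self]; exact dvd_zero _⟩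

theorem b_distance_Ci_eq_general {R : Type*} [CommRing R] [Nontrivial R] [DecidableEq R] {n b : ℕ}
    [NeZero n] (hb : 0 < b) {g : R[X]} (hg : g.Monic) (hdvd : g ∣ X ^ n - 1)
    (hgb : g.natDegree ≤ b) (hgn : g.natDegree + b ≤ n) :
    dBcode b (cyclicCode n g : Set (Fin n → R)) = g.natDegree + b :=
  dBcode_eq_of_forall_le_of_exists_le _
    (fun _ => natDegree_add_le_hammingNorm_piB hg hdvd hgb hgn)
    (exists_mem_cyclicCode_hammingNorm_piB_le hb hg (by omega))

/-- For `e ≥ 2`, `b ≥ 2`, and `1 ≤ i ≤ p^{e-1}` with `i + b ≤ p^e` and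
`i ≤ b`, the cyclic code `C_i = ⟨(x-1)^i⟩ ⊆ 𝔽_{p^m}[x]/⟨x^{p^e}-1⟩`
satisfies `d_b(C_i) = i + b`. -/
theorem b_distance_Ci_eq (p m e : ℕ) [Fact p.Prime] (hm : 0 < m) (he : 2 ≤ e)
    (b : ℕ) (hb2 : 2 ≤ b) (i : ℕ) (hi1 : 1 ≤ i) (hi2 : i ≤ p ^ (e - 1))
    (hib : i + b ≤ p ^ e) (hib' : i ≤ b) :
    dBcode b (Ccode p m e i) = i + b := by
  classical
  have hi : i ≤ p ^ e := by omega
  have hmonic : (X - 1 : (GaloisField p m)[X]).Monic := monic_X_sub_C 1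
  have hdeg := natDegree_X_sub_one_pow (R := GaloisField p m) i
  rw [Ccode_eq_cyclicCode p m e hi, b_distance_Ci_eq_general (by omega) (hmonic.pow i)
    (X_sub_one_pow_dvd_X_pow_char_pow_sub_one p hi) (hdeg.trans_le hib') (by rwa [hdeg]), hdeg]
end
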